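/- For every supplier i and every bid vector α ∈ ℝ^N, the point t* = ( β̂_i · Q_i(α) − (β̂_i − 1) · (θ_{i1} + θ_{i2} ξ) ) / (1 − β̂_i²) is the unique global maximizer over ℝ of the function t ↦ φ_i(α[i := t]): that is, φ_i(α[i := t*]) ≥ φ_i(α[i := t]) for all t ∈ ℝ, with equality only for t = t*. -/

import Mathlib

/-!
Write `R` for the clearing price, `c` for the cost intercept and `b` for the normalized inverse
slope of supplier `i`. Her profit factors as a difference of squares,
`((R - c) ^ 2 - (t - c) ^ 2) / (2 * β i)`, where `t` is her own bid, and `R` is affine in `t` with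
slope `b`. The profit is thus a quadratic in `t` with leading coefficient
`-(1 - b ^ 2) / (2 * β i)`, which is negative since `0 < b < 1`, and `t*` is the solution of its
first-order condition `t - c = b * (R - c)`.
-/

namespace SupplyMarket

open Finset Function

variable {ι K : Type*} [Fintype ι] [Field K]

/-- The aggregate inverse slope `S` of the supply side. -/
def totalInvSlope (β : ι → K) : K :=
  ∑ l, 1 / β l

/-- The price `R(α)` at which the dispatches of all suppliers add up to the demand `Q`. -/
def clearingPrice (β : ι → K) (Q : K) (α : ι → K) : K :=
  (Q + ∑ l, α l / β l) / totalInvSlope β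

/-- The quantity `P_i(α)` that supplier `i` sells at the clearing price. -/
def dispatch (β : ι → K) (Q : K) (α : ι → K) (i : ι) : K :=
  (clearingPrice β Q α - α i) / β i

/-- The share `β̂_i` of supplier `i` in the aggregate inverse slope. -/
def normalizedInvSlope (β : ι → K) (i : ι) : K :=
  1 / β i / totalInvSlope β

/-- The part `Q_i(α)` of the clearing price that does not depend on the bid of supplier `i`. -/
def residualPrice [DecidableEq ι] (β : ι → K) (Q : K) (i : ι) (α : ι → K) : K :=
  (Q + ∑ k ∈ univ.erase i, α k / β k) / totalInvSlope β

/-- The profit `φ_i(α)` of supplier `i`. The scalar `c` is her marginal cost at zero output, which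
is `θ_{i1} + θ_{i2} ξ` in the fuel-price model. -/
def profit (β : ι → K) (Q c : K) (i : ι) (α : ι → K) : K :=
  (clearingPrice β Q α - c) * dispatch β Q α i - β i / 2 * dispatch β Q α i ^ 2

/-- The bid `t*` with which supplier `i` answers the bids of the others. -/
def bestResponse [DecidableEq ι] (β : ι → K) (Q c : K) (i : ι) (α : ι → K) : K :=
  (normalizedInvSlope β i * residualPrice β Q i α - (normalizedInvSlope β i - 1) * c) /
    (1 - normalizedInvSlope β i ^ 2)

section Algebra

variable {β : ι → K} {i : ι}

theorem profit_eq_sq_sub_sq [NeZero (2 : K)] (hβ : β i ≠ 0) (Q c : K) (α : ι → K) :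
    profit β Q c i α = ((clearingPrice β Q α - c) ^ 2 - (α i - c) ^ 2) / (2 * β i) := by
  unfold profit dispatch
  field_simp
  ring

variable [DecidableEq ι]

theorem clearingPrice_update (β : ι → K) (Q : K) (i : ι) (α : ι → K) (t : K) :
    clearingPrice β Q (update α i t) = residualPrice β Q i α + normalizedInvSlope β i * t := by
  have sum_others : ∑ k ∈ univ.erase i, update α i t k / β k = ∑ k ∈ univ.erase i, α k / β k :=
    sum_congr rfl fun k hk => by rw [update_of_ne (ne_of_mem_erase hk)]
  rw [clearingPrice, ← add_sum_erase _ _ (mem_univ i), sum_others, update_self, residualPrice,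
    normalizedInvSlope]
  ring

theorem bestResponse_sub_eq (hb : normalizedInvSlope β i ^ 2 ≠ 1) (Q c : K) (α : ι → K) :
    bestResponse β Q c i α - c =
      normalizedInvSlope β i *
        (clearingPrice β Q (update α i (bestResponse β Q c i α)) - c) := by
  have bestResponse_mul : bestResponse β Q c i α * (1 - normalizedInvSlope β i ^ 2) =
      normalizedInvSlope β i * residualPrice β Q i α - (normalizedInvSlope β i - 1) * c :=
    div_mul_cancel₀ _ (sub_ne_zero.mpr hb.symm)
  rw [clearingPrice_update]
  linear_combination bestResponse_mul

theorem profit_update_bestResponse_sub [NeZero (2 : K)] (hβ : β i ≠ 0)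
    (hb : normalizedInvSlope β i ^ 2 ≠ 1) (Q c : K) (α : ι → K) (t : K) :
    profit β Q c i (update α i (bestResponse β Q c i α)) - profit β Q c i (update α i t) =
      (1 - normalizedInvSlope β i ^ 2) / (2 * β i) * (t - bestResponse β Q c i α) ^ 2 := by
  have first_order := bestResponse_sub_eq hb Q c α
  simp only [profit_eq_sq_sub_sq hβ, update_self, clearingPrice_update] at first_order ⊢
  linear_combination 2 * (t - bestResponse β Q c i α) / (2 * β i) * first_order

end Algebra

section Order

variable [LinearOrder K] [IsStrictOrderedRing K] {β : ι → K}

theorem totalInvSlope_pos [Nonempty ι] (hβ : ∀ l, 0 < β l) : 0 < totalInvSlope β :=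
  sum_pos (fun l _ => one_div_pos.mpr (hβ l)) univ_nonempty

theorem normalizedInvSlope_pos (hβ : ∀ l, 0 < β l) (i : ι) : 0 < normalizedInvSlope β i :=
  have : Nonempty ι := ⟨i⟩
  div_pos (one_div_pos.mpr (hβ i)) (totalInvSlope_pos hβ)

theorem normalizedInvSlope_lt_one [Nontrivial ι] (hβ : ∀ l, 0 < β l) (i : ι) :
    normalizedInvSlope β i < 1 := by
  obtain ⟨j, hji⟩ := exists_ne i
  have inv_lt_total : 1 / β i < totalInvSlope β :=
    single_lt_sum hji (mem_univ i) (mem_univ j) (one_div_pos.mpr (hβ j))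
      fun k _ _ => (one_div_pos.mpr (hβ k)).le
  exact (div_lt_one (totalInvSlope_pos hβ)).mpr inv_lt_total

theorem profit_update_lt_profit_update_bestResponse [DecidableEq ι] {i : ι} (hβ : 0 < β i)
    (hb : normalizedInvSlope β i ^ 2 < 1) (Q c : K) (α : ι → K) {t : K}
    (ht : t ≠ bestResponse β Q c i α) :
    profit β Q c i (update α i t) < profit β Q c i (update α i (bestResponse β Q c i α)) := by
  rw [← sub_pos, profit_update_bestResponse_sub hβ.ne' hb.ne]
  have curvature_pos : 0 < (1 - normalizedInvSlope β i ^ 2) / (2 * β i) :=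
    div_pos (sub_pos.mpr hb) (mul_pos two_pos hβ)
  exact mul_pos curvature_pos (sq_pos_of_ne_zero (sub_ne_zero.mpr ht))

end Order

end SupplyMarket

open SupplyMarket in
theorem best_response_unique_maximizer_general {ι K : Type*} [Fintype ι] [Nontrivial ι]
    [DecidableEq ι] [Field K] [LinearOrder K] [IsStrictOrderedRing K]
    {β : ι → K} (hβ : ∀ l, 0 < β l) (Q c : K) (i : ι) (α : ι → K) (t : K) :
    profit β Q c i (Function.update α i t) ≤
        profit β Q c i (Function.update α i (bestResponse β Q c i α)) ∧
      (profit β Q c i (Function.update α i t) =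
        profit β Q c i (Function.update α i (bestResponse β Q c i α)) →
          t = bestResponse β Q c i α) := by
  have slope_sq_lt_one : normalizedInvSlope β i ^ 2 < 1 :=
    pow_lt_one₀ (normalizedInvSlope_pos hβ i).le (normalizedInvSlope_lt_one hβ i) two_ne_zero
  rcases eq_or_ne t (bestResponse β Q c i α) with rfl | t_ne
  · exact ⟨le_rfl, fun _ => rfl⟩
  · have profit_lt :=
      profit_update_lt_profit_update_bestResponse (hβ i) slope_sq_lt_one Q c α t_ne
    exact ⟨profit_lt.le, fun profit_eq => absurd profit_eq profit_lt.ne⟩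

/-- **Unique best response.** The point `t*` is the unique global maximizer of
supplier `i`'s profit as a function of her own bid. -/
theorem best_response_unique_maximizer
    (N : ℕ) (hN : 2 ≤ N) (β : Fin N → ℝ) (hβ : ∀ i, 0 < β i)
    (Q ξ : ℝ) (θ1 θ2 : Fin N → ℝ)
    (S : ℝ) (hS : S = ∑ l, 1 / β l)
    (R : (Fin N → ℝ) → ℝ)
    (hR : ∀ α, R α = (Q + ∑ l, α l / β l) / S)
    (P : (Fin N → ℝ) → Fin N → ℝ)
    (hP : ∀ α i, P α i = (R α - α i) / β i)
    (βh : Fin N → ℝ) (hβh : ∀ i, βh i = (1 / β i) / S)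
    (Qi : Fin N → (Fin N → ℝ) → ℝ)
    (hQi : ∀ i α, Qi i α = (Q + ∑ k ∈ Finset.univ.erase i, α k / β k) / S)
    (φ : Fin N → (Fin N → ℝ) → ℝ)
    (hφ : ∀ i α, φ i α
      = (R α - (θ1 i + θ2 i * ξ)) * P α i - β i / 2 * (P α i) ^ 2)
    (i : Fin N) (α : Fin N → ℝ)
    (tstar : ℝ)
    (htstar : tstar
      = (βh i * Qi i α - (βh i - 1) * (θ1 i + θ2 i * ξ)) / (1 - (βh i) ^ 2)) :
    ∀ t : ℝ, φ i (Function.update α i t) ≤ φ i (Function.update α i tstar) ∧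
      (φ i (Function.update α i t) = φ i (Function.update α i tstar) → t = tstar) := by
  have : Nontrivial (Fin N) := Fin.nontrivial_iff_two_le.mpr hN
  simp only [htstar, hφ, hP, hR, hβh, hQi, hS]
  exact best_response_unique_maximizer_general hβ Q (θ1 i + θ2 i * ξ) i α
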